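/- Two-scale compactness in L^p: let 1 < p < ∞ and let E = (ε_n) be a sequence of positive reals tending to 0. If a sequence (u_ε)_{ε∈E} is bounded in L^p(Q_T), then there exist a subsequence E′ of E and a function u ∈ L^p(Q_T × 𝒯 × 𝒴) such that (u_ε)_{ε∈E′} weakly two-scale converges to u in L^p(Q_T). -/

import Mathlib

open MeasureTheory Filter Set

noncomputable section

/-- Points of `ℝ^N`. -/
abbrev Vn (N : ℕ) := Fin N → ℝ

/-- The unit cell `𝒴 = (0,1)^N`. -/
def cellY (N : ℕ) : Set (Vn N) := Set.univ.pi fun _ => Set.Ioo (0:ℝ) 1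

/-- The unit time cell `𝒯 = (0,1)`. -/
def cellT : Set ℝ := Set.Ioo 0 1

/-- `𝒵 = 𝒯 × 𝒴`-periodicity of a function of the fast variables `(τ,y)`. -/
def ZPer {N : ℕ} (w : ℝ → Vn N → ℝ) : Prop :=
  ∀ (τ : ℝ) (y : Vn N) (l : ℤ) (kk : Fin N → ℤ), w (τ + l) (fun i => y i + kk i) = w τ y

/-- Admissible test functions: `ψ ∈ L^{p'}(Q_T; C_per(𝒯×𝒴))`, i.e. `ψ = ψ(t,x,τ,y)`
is jointly continuous, `𝒵`-periodic in `(τ,y)`, and dominated in modulus by an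
`L^{p'}(Q_T)` function of `(t,x)`. -/
structure AdmissibleTest (N : ℕ) (QT : Set (ℝ × Vn N)) (p' : ℝ)
    (ψ : ℝ → Vn N → ℝ → Vn N → ℝ) : Prop where
  cont : Continuous fun q : (ℝ × Vn N) × ℝ × Vn N => ψ q.1.1 q.1.2 q.2.1 q.2.2
  per : ∀ t x, ZPer (ψ t x)
  dom : ∃ h : ℝ × Vn N → ℝ, MemLp h (ENNReal.ofReal p') (volume.restrict QT) ∧
      ∀ t x τ y, |ψ t x τ y| ≤ h (t, x)

/-- Weak two-scale convergence in `L^p(Q_T)` of the sequence `u n` (with scale `ε n`)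
to `u₀ ∈ L^p(Q_T; L^p_per(𝒯×𝒴))` (Definition 3.1 of the paper). -/
def WeakTwoScale (N : ℕ) (QT : Set (ℝ × Vn N)) (p : ℝ) (ε : ℕ → ℝ)
    (u : ℕ → ℝ × Vn N → ℝ) (u₀ : ℝ × Vn N → ℝ → Vn N → ℝ) : Prop :=
  ∀ ψ : ℝ → Vn N → ℝ → Vn N → ℝ, AdmissibleTest N QT (p / (p - 1)) ψ →
    Tendsto (fun n => ∫ q in QT, u n q * ψ q.1 q.2 (q.1 / ε n) (fun i => q.2 i / ε n))
      atTop
      (nhds (∫ q in QT, ∫ τ in cellT, ∫ y in cellY N, u₀ q τ y * ψ q.1 q.2 τ y))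

/-- Strong two-scale convergence in `L^p(Q_T)`: weak two-scale convergence together with
convergence of the `L^p` norms. -/
def StrongTwoScale (N : ℕ) (QT : Set (ℝ × Vn N)) (p : ℝ) (ε : ℕ → ℝ)
    (u : ℕ → ℝ × Vn N → ℝ) (u₀ : ℝ × Vn N → ℝ → Vn N → ℝ) : Prop :=
  WeakTwoScale N QT p ε u u₀ ∧
    Tendsto (fun n => ∫ q in QT, |u n q| ^ p) atTop
      (nhds (∫ q in QT, ∫ τ in cellT, ∫ y in cellY N, |u₀ q τ y| ^ p))

/-!
Unfolding at scale `ε` replaces a function `u` of `x` by the function `u (unfoldPoint b ε (x, z))`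
of a slow variable `x` and a fast variable `z` in the period cell. The map
`(x, s) ↦ (x - ε s, x / ε mod 1)` preserves the product measure and takes the unfolded function back
to `u`, so testing the unfolded function against `g (x, z)` is testing `u` against
`g (x - ε s, x / ε)`; this differs from the oscillating test function `g (x, x / ε)` by an error
that tends to `0` in `L^q`. Hence the two-scale limits of `u` are the ordinary weak limits of the
unfolded functions, which are bounded in `L^p`. Weak compactness of bounded sets of `L^p` follows
from Banach–Alaoglu and the Riesz representation `(L^q)* = L^p`, where the density is a
Radon–Nikodym derivative and duality bounds its truncations uniformly in `L^p`.
-/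

open scoped ENNReal NNReal Topology Pointwise

section LpDuality

variable {α : Type*} {mα : MeasurableSpace α} {μ : Measure α} {p q : ℝ≥0∞}

section Pairing

variable [Fact (1 ≤ p)] [Fact (1 ≤ q)] [p.HolderConjugate q]

lemma lpPairing_mul_toLp {f g : α → ℝ} (hf : MemLp f p μ) (hg : MemLp g q μ) :
    (ContinuousLinearMap.mul ℝ ℝ).lpPairing μ p q (hf.toLp f) (hg.toLp g)
      = ∫ x, f x * g x ∂μ := by
  rw [ContinuousLinearMap.lpPairing_eq_integral]
  refine integral_congr_ae ?_
  filter_upwards [hf.coeFn_toLp, hg.coeFn_toLp] with x hfx hgx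
  rw [hfx, hgx, ContinuousLinearMap.mul_apply']

lemma tendsto_integral_mul_zero {u D : ℕ → α → ℝ} (hu : ∀ n, MemLp (u n) p μ) {C : ℝ≥0}
    (hC : ∀ n, eLpNorm (u n) p μ ≤ C) (hD : ∀ n, MemLp (D n) q μ)
    (hD0 : Tendsto (fun n ↦ eLpNorm (D n) q μ) atTop (𝓝 0)) :
    Tendsto (fun n ↦ ∫ x, u n x * D n x ∂μ) atTop (𝓝 0) := by
  set B := (ContinuousLinearMap.mul ℝ ℝ).lpPairing μ p q
  have hu_le (n : ℕ) : ‖(hu n).toLp (u n)‖ ≤ C := by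
    rw [Lp.norm_toLp]
    exact ENNReal.toReal_mono ENNReal.coe_ne_top (hC n)
  have hD_norm : Tendsto (fun n ↦ ‖(hD n).toLp (D n)‖) atTop (𝓝 0) := by
    simpa only [Lp.norm_toLp, ENNReal.toReal_zero, Function.comp_def]
      using (ENNReal.tendsto_toReal ENNReal.zero_ne_top).comp hD0
  refine squeeze_zero_norm (fun n ↦ ?_)
    (by simpa only [mul_zero] using hD_norm.const_mul (‖B‖ * C))
  calc ‖∫ x, u n x * D n x ∂μ‖
      = ‖B ((hu n).toLp (u n)) ((hD n).toLp (D n))‖ := by rw [lpPairing_mul_toLp]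
    _ ≤ ‖B‖ * ‖(hu n).toLp (u n)‖ * ‖(hD n).toLp (D n)‖ := B.le_opNorm₂ _ _
    _ ≤ ‖B‖ * C * ‖(hD n).toLp (D n)‖ := by gcongr; exact hu_le n

end Pairing

lemma abs_mul_abs_rpow_sub_two {r : ℝ} (hr : r ≠ 1) (a : ℝ) :
    |a * |a| ^ (r - 2)| = |a| ^ (r - 1) := by
  have hexp : 1 + (r - 2) = r - 1 := by ring
  rw [abs_mul, Real.abs_rpow_of_nonneg (abs_nonneg a), abs_abs,
    ← Real.rpow_one_add' (abs_nonneg a) (hexp ▸ sub_ne_zero.2 hr), hexp]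

lemma mul_mul_abs_rpow_sub_two {r : ℝ} (hr : r ≠ 0) (a : ℝ) :
    a * (a * |a| ^ (r - 2)) = |a| ^ r := by
  have hexp : 2 + (r - 2) = r := by ring
  rw [← mul_assoc, ← sq, ← sq_abs, ← Real.rpow_two,
    ← Real.rpow_add' (abs_nonneg a) (hexp.symm ▸ hr), hexp]

lemma eLpNorm_mul_abs_rpow_sub_two (hp : p ≠ ∞) (hq : q ≠ ∞) [p.HolderConjugate q]
    (f : α → ℝ) :
    eLpNorm (fun x ↦ f x * |f x| ^ (p.toReal - 2)) q μ = eLpNorm f p μ ^ (p.toReal - 1) := by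
  have hpq := ENNReal.HolderConjugate.toReal_of_ne_top hp hq
  have hexp : q * ENNReal.ofReal (p.toReal - 1) = p := by
    rw [← ENNReal.ofReal_toReal hq, ← ENNReal.ofReal_mul hpq.symm.nonneg, mul_comm,
      hpq.sub_one_mul_conj, ENNReal.ofReal_toReal hp]
  calc eLpNorm (fun x ↦ f x * |f x| ^ (p.toReal - 2)) q μ
      = eLpNorm (fun x ↦ ‖f x‖ ^ (p.toReal - 1)) q μ := by
        refine eLpNorm_congr_norm_ae (ae_of_all _ fun x ↦ ?_)
        rw [Real.norm_of_nonneg (r := ‖f x‖ ^ _) (by positivity), Real.norm_eq_abs,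
          abs_mul_abs_rpow_sub_two hpq.lt.ne', Real.norm_eq_abs]
    _ = eLpNorm f p μ ^ (p.toReal - 1) := by rw [eLpNorm_norm_rpow f hpq.sub_one_pos, hexp]

lemma norm_le_norm_lpPairing [Fact (1 ≤ p)] [Fact (1 ≤ q)] [p.HolderConjugate q]
    (hp : p ≠ ∞) (hq : q ≠ ∞) (F : Lp ℝ p μ) :
    ‖F‖ ≤ ‖(ContinuousLinearMap.mul ℝ ℝ).lpPairing μ p q F‖ := by
  have hpq := ENNReal.HolderConjugate.toReal_of_ne_top hp hq
  set r := p.toReal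
  set G : α → ℝ := fun x ↦ F x * |F x| ^ (r - 2)
  have hG_norm : eLpNorm G q μ = eLpNorm F p μ ^ (r - 1) := eLpNorm_mul_abs_rpow_sub_two hp hq F
  have hG : MemLp G q μ := by
    have hF_meas : AEMeasurable F μ := (Lp.aestronglyMeasurable F).aemeasurable
    refine ⟨(by fun_prop : AEMeasurable G μ).aestronglyMeasurable, ?_⟩
    rw [hG_norm]
    exact ENNReal.rpow_lt_top_of_nonneg hpq.sub_one_pos.le (Lp.eLpNorm_ne_top F)
  have hpair : (ContinuousLinearMap.mul ℝ ℝ).lpPairing μ p q F (hG.toLp G) = ‖F‖ ^ r := by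
    rw [← Lp.toLp_coeFn F (Lp.memLp F), lpPairing_mul_toLp, Lp.norm_toLp,
      (Lp.memLp F).eLpNorm_eq_integral_rpow_norm (zero_lt_one.trans_le Fact.out).ne' hp,
      ENNReal.toReal_ofReal (by positivity),
      Real.rpow_inv_rpow (by positivity) hpq.ne_zero]
    simp only [G, mul_mul_abs_rpow_sub_two hpq.ne_zero, Real.norm_eq_abs, r]
  have hG_toLp : ‖hG.toLp G‖ = ‖F‖ ^ (r - 1) := by
    rw [Lp.norm_toLp, hG_norm, ← ENNReal.toReal_rpow, Lp.norm_def]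
  rcases (norm_nonneg F).eq_or_lt with hF | hF
  · rw [← hF]; positivity
  refine le_of_mul_le_mul_right ?_ (Real.rpow_pos_of_pos hF (r - 1))
  calc ‖F‖ * ‖F‖ ^ (r - 1)
      = (ContinuousLinearMap.mul ℝ ℝ).lpPairing μ p q F (hG.toLp G) := by
        rw [hpair, ← Real.rpow_one_add' hF.le (by linarith [hpq.pos])]; ring_nf
    _ ≤ ‖(ContinuousLinearMap.mul ℝ ℝ).lpPairing μ p q F‖ * ‖hG.toLp G‖ :=
        (Real.le_norm_self _).trans (ContinuousLinearMap.le_opNorm _ _)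
    _ = _ := by rw [hG_toLp]

/-- Multiplication by the indicator function of `S`, as an operator on `L^q`. -/
def indicatorL [Fact (1 ≤ q)] {S : Set α} (hS : MeasurableSet S) : Lp ℝ q μ →L[ℝ] Lp ℝ q μ :=
  LinearMap.mkContinuous
    { toFun g := ((Lp.memLp g).indicator hS).toLp (S.indicator g)
      map_add' g h := by
        rw [← MemLp.toLp_add, MemLp.toLp_eq_toLp_iff, ← indicator_add']
        exact (Lp.coeFn_add g h).indicator
      map_smul' c g := by
        rw [RingHom.id_apply, ← MemLp.toLp_const_smul, MemLp.toLp_eq_toLp_iff]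
        filter_upwards [Lp.coeFn_smul c g] with x hx
        simp [indicator, hx] }
    1 fun g ↦ by
      change ‖((Lp.memLp g).indicator hS).toLp (S.indicator g)‖ ≤ 1 * ‖g‖
      rw [one_mul, Lp.norm_toLp, Lp.norm_def]
      exact ENNReal.toReal_mono (Lp.eLpNorm_ne_top g) (eLpNorm_indicator_le g)

lemma indicatorL_apply [Fact (1 ≤ q)] {S : Set α} (hS : MeasurableSet S) (g : Lp ℝ q μ) :
    indicatorL hS g = ((Lp.memLp g).indicator hS).toLp (S.indicator g) :=
  rfl

lemma norm_indicatorL_le [Fact (1 ≤ q)] {S : Set α} (hS : MeasurableSet S) :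
    ‖(indicatorL hS : Lp ℝ q μ →L[ℝ] Lp ℝ q μ)‖ ≤ 1 :=
  LinearMap.mkContinuous_norm_le _ zero_le_one _

section FiniteMeasure

variable [IsFiniteMeasure μ]

lemma sum_indicatorConstLp {ι : Type*} {A : ι → Set α} (hA : ∀ i, MeasurableSet (A i))
    (hd : Pairwise (Function.onFun Disjoint A)) (s : Finset ι) :
    ∑ i ∈ s, indicatorConstLp p (hA i) (measure_ne_top μ (A i)) (1 : ℝ)
      = indicatorConstLp p (s.measurableSet_biUnion fun i _ ↦ hA i)
          (measure_ne_top μ (⋃ i ∈ s, A i)) 1 := by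
  classical
  induction s using Finset.induction_on with
  | empty => simp
  | insert i s hi ih =>
    have hdisj : Disjoint (A i) (⋃ j ∈ s, A j) :=
      disjoint_iUnion₂_right.2 fun j hj ↦ hd (by rintro rfl; exact hi hj)
    rw [Finset.sum_insert hi, ih, ← indicatorConstLp_disjoint_union _ _ _ _ hdisj]
    simp only [Finset.set_biUnion_insert]

lemma tendsto_measure_symmDiff_biUnion {A : ℕ → Set α} (hA : ∀ i, MeasurableSet (A i))
    (hd : Pairwise (Function.onFun Disjoint A)) :
    Tendsto (fun s : Finset ℕ ↦ μ (symmDiff (⋃ i ∈ s, A i) (⋃ i, A i))) atTop (𝓝 0) := by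
  have hdiff (s : Finset ℕ) :
      μ (symmDiff (⋃ i ∈ s, A i) (⋃ i, A i)) = μ (⋃ i, A i) - ∑ i ∈ s, μ (A i) := by
    have hsub : ⋃ i ∈ s, A i ⊆ ⋃ i, A i := iUnion₂_subset_iUnion _ _
    rw [symmDiff_of_le hsub, measure_sdiff hsub
      (s.measurableSet_biUnion fun i _ ↦ hA i).nullMeasurableSet (measure_ne_top _ _),
      measure_biUnion_finset (fun i _ j _ hij ↦ hd hij) fun i _ ↦ hA i]
  have hsum : HasSum (fun i ↦ μ (A i)) (μ (⋃ i, A i)) :=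
    measure_iUnion hd hA ▸ ENNReal.summable.hasSum
  simp only [hdiff]
  rw [← tsub_self (μ (⋃ i, A i))]
  exact ENNReal.Tendsto.sub tendsto_const_nhds hsum (Or.inl (measure_ne_top μ _))

open scoped Classical in
/-- The `L^q`-valued vector measure `A ↦ 1_A`. Continuous functionals on `L^q` map it to signed
measures, to which the Radon–Nikodym theorem applies. -/
def indicatorVectorMeasure (μ : Measure α) [IsFiniteMeasure μ] [Fact (1 ≤ q)] (hq : q ≠ ∞) :
    VectorMeasure α (Lp ℝ q μ) where
  measureOf' A :=
    if hA : MeasurableSet A then indicatorConstLp q hA (measure_ne_top μ A) 1 else 0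
  empty' := by simp
  not_measurable' A hA := dif_neg hA
  m_iUnion' A hA hd := by
    simp only [hA, MeasurableSet.iUnion hA, dif_pos, HasSum, sum_indicatorConstLp hA hd]
    exact tendsto_indicatorConstLp_set hq (tendsto_measure_symmDiff_biUnion hA hd)

variable [Fact (1 ≤ q)]

lemma indicatorVectorMeasure_apply (hq : q ≠ ∞) {A : Set α} (hA : MeasurableSet A) :
    indicatorVectorMeasure μ hq A = indicatorConstLp q hA (measure_ne_top μ A) 1 :=
  dif_pos hA

lemma indicatorVectorMeasure_absolutelyContinuous (hq : q ≠ ∞) :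
    (indicatorVectorMeasure μ hq).AbsolutelyContinuous μ.toENNRealVectorMeasure := by
  refine VectorMeasure.AbsolutelyContinuous.mk fun A hA hμA ↦ ?_
  rw [Measure.toENNRealVectorMeasure_apply_measurable hA] at hμA
  rw [indicatorVectorMeasure_apply hq hA, Lp.eq_zero_iff_ae_eq_zero]
  exact indicatorConstLp_coeFn.trans (indicator_meas_zero hμA)

lemma exists_measurable_apply_indicatorConstLp_eq (hq : q ≠ ∞) (ℓ : StrongDual ℝ (Lp ℝ q μ)) :
    ∃ f : α → ℝ, Measurable f ∧ ∀ (A : Set α) (hA : MeasurableSet A),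
      ℓ (indicatorConstLp q hA (measure_ne_top μ A) 1) = ∫ x in A, f x ∂μ := by
  set s : SignedMeasure α :=
    (indicatorVectorMeasure μ hq).mapRange (ℓ : Lp ℝ q μ →+ ℝ) ℓ.continuous
  have hs_apply (A : Set α) : s A = ℓ (indicatorVectorMeasure μ hq A) := rfl
  have hs : s.AbsolutelyContinuous μ.toENNRealVectorMeasure := fun A hA ↦ by
    rw [hs_apply, indicatorVectorMeasure_absolutelyContinuous hq hA, map_zero]
  refine ⟨s.rnDeriv μ, s.measurable_rnDeriv μ, fun A hA ↦ ?_⟩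
  rw [← withDensityᵥ_apply (s.integrable_rnDeriv μ) hA, s.withDensityᵥ_rnDeriv_eq μ hs,
    hs_apply, indicatorVectorMeasure_apply hq hA]

lemma strongDual_Lp_ext (hq : q ≠ ∞) {ℓ m : StrongDual ℝ (Lp ℝ q μ)}
    (h : ∀ (A : Set α) (hA : MeasurableSet A),
      ℓ (indicatorConstLp q hA (measure_ne_top μ A) 1)
        = m (indicatorConstLp q hA (measure_ne_top μ A) 1)) :
    ℓ = m := by
  ext g
  induction g using Lp.induction hq with
  | @indicatorConst c s hs hμs =>
    have hsmul : (Lp.simpleFunc.indicatorConst q hs hμs.ne c : Lp ℝ q μ)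
        = c • indicatorConstLp q hs (measure_ne_top μ s) (1 : ℝ) := by
      rw [Lp.simpleFunc.coe_indicatorConst, indicatorConstLp, indicatorConstLp,
        ← MemLp.toLp_const_smul, MemLp.toLp_eq_toLp_iff]
      exact ae_of_all _ fun x ↦ by simp [indicator]
    rw [hsmul, map_smul, map_smul, h]
  | add _ _ _ hf hg => rw [map_add, map_add, hf, hg]
  | isClosed => exact isClosed_eq ℓ.continuous m.continuous

lemma indicatorL_indicatorConstLp {S A : Set α} (hS : MeasurableSet S) (hA : MeasurableSet A) :
    indicatorL hS (indicatorConstLp q hA (measure_ne_top μ A) (1 : ℝ))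
      = indicatorConstLp q (hS.inter hA) (measure_ne_top μ _) 1 := by
  rw [indicatorL_apply, indicatorConstLp, indicatorConstLp, MemLp.toLp_eq_toLp_iff,
    ← indicator_indicator]
  exact (MemLp.coeFn_toLp _).indicator

section Riesz

variable [Fact (1 ≤ p)] [p.HolderConjugate q]

lemma lpPairing_mul_indicatorConstLp {f : α → ℝ} (hf : MemLp f p μ) {A : Set α}
    (hA : MeasurableSet A) :
    (ContinuousLinearMap.mul ℝ ℝ).lpPairing μ p q (hf.toLp f)
      (indicatorConstLp q hA (measure_ne_top μ A) 1) = ∫ x in A, f x ∂μ := by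
  rw [indicatorConstLp, lpPairing_mul_toLp, ← integral_indicator hA]
  simp only [← indicator_mul_right, mul_one]

lemma eLpNorm_indicator_le_norm_of_apply_indicatorConstLp (hp : p ≠ ∞) (hq : q ≠ ∞)
    {ℓ : StrongDual ℝ (Lp ℝ q μ)} {f : α → ℝ}
    (hf : ∀ (A : Set α) (hA : MeasurableSet A),
      ℓ (indicatorConstLp q hA (measure_ne_top μ A) 1) = ∫ x in A, f x ∂μ)
    {S : Set α} (hS : MeasurableSet S) (hfS : MemLp (S.indicator f) p μ) :
    eLpNorm (S.indicator f) p μ ≤ ENNReal.ofReal ‖ℓ‖ := by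
  have hcomp : (ContinuousLinearMap.mul ℝ ℝ).lpPairing μ p q (hfS.toLp _)
      = ℓ.comp (indicatorL hS) := by
    refine strongDual_Lp_ext hq fun A hA ↦ ?_
    rw [lpPairing_mul_indicatorConstLp, ContinuousLinearMap.comp_apply,
      indicatorL_indicatorConstLp hS hA, hf, setIntegral_indicator hS, inter_comm]
  rw [← ENNReal.ofReal_toReal hfS.eLpNorm_ne_top, ← Lp.norm_toLp _ hfS]
  refine ENNReal.ofReal_le_ofReal ?_
  calc ‖hfS.toLp _‖
      ≤ ‖ℓ.comp (indicatorL hS)‖ := hcomp ▸ norm_le_norm_lpPairing hp hq (hfS.toLp _)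
    _ ≤ ‖ℓ‖ * ‖indicatorL hS‖ := ℓ.opNorm_comp_le _
    _ ≤ ‖ℓ‖ := mul_le_of_le_one_right (norm_nonneg _) (norm_indicatorL_le hS)

lemma memLp_of_apply_indicatorConstLp (hp : p ≠ ∞) (hq : q ≠ ∞)
    {ℓ : StrongDual ℝ (Lp ℝ q μ)} {f : α → ℝ} (hf_meas : Measurable f)
    (hf : ∀ (A : Set α) (hA : MeasurableSet A),
      ℓ (indicatorConstLp q hA (measure_ne_top μ A) 1) = ∫ x in A, f x ∂μ) :
    MemLp f p μ := by
  set S : ℕ → Set α := fun k ↦ {x | |f x| ≤ k}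
  have hS (k : ℕ) : MeasurableSet (S k) := measurableSet_le hf_meas.abs measurable_const
  have hfS (k : ℕ) : MemLp ((S k).indicator f) p μ := by
    refine MemLp.of_bound (hf_meas.indicator (hS k)).aestronglyMeasurable k (ae_of_all _ fun x ↦ ?_)
    rw [norm_indicator_eq_indicator_norm]
    exact indicator_apply_le' (fun hx ↦ hx) fun _ ↦ Nat.cast_nonneg k
  have hlim (x : α) : Tendsto (fun k ↦ (S k).indicator f x) atTop (𝓝 (f x)) := by
    refine tendsto_const_nhds.congr' ?_
    filter_upwards [eventually_ge_atTop ⌈|f x|⌉₊] with k hk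
    have hx : x ∈ S k := Nat.ceil_le.1 hk
    exact (indicator_of_mem hx f).symm
  refine ⟨hf_meas.aestronglyMeasurable, lt_of_le_of_lt ?_ (ENNReal.ofReal_lt_top (r := ‖ℓ‖))⟩
  calc eLpNorm f p μ
      ≤ liminf (fun k ↦ eLpNorm ((S k).indicator f) p μ) atTop :=
        Lp.eLpNorm_lim_le_liminf_eLpNorm (fun k ↦ (hfS k).1) f (ae_of_all _ hlim)
    _ ≤ liminf (fun _ : ℕ ↦ ENNReal.ofReal ‖ℓ‖) atTop := liminf_le_liminf <| .of_forall fun k ↦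
        eLpNorm_indicator_le_norm_of_apply_indicatorConstLp hp hq hf (hS k) (hfS k)
    _ = ENNReal.ofReal ‖ℓ‖ := liminf_const _

theorem exists_lpPairing_eq (hp : p ≠ ∞) (hq : q ≠ ∞) (ℓ : StrongDual ℝ (Lp ℝ q μ)) :
    ∃ F : Lp ℝ p μ, (ContinuousLinearMap.mul ℝ ℝ).lpPairing μ p q F = ℓ := by
  obtain ⟨f, hf_meas, hf⟩ := exists_measurable_apply_indicatorConstLp_eq hq ℓ
  have hfp : MemLp f p μ := memLp_of_apply_indicatorConstLp hp hq hf_meas hf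
  refine ⟨hfp.toLp f, strongDual_Lp_ext hq fun A hA ↦ ?_⟩
  rw [lpPairing_mul_indicatorConstLp, hf]

theorem exists_subseq_tendsto_integral_mul [IsSeparable μ] (hp : p ≠ ∞) (hq : q ≠ ∞)
    {u : ℕ → α → ℝ} (hu : ∀ n, MemLp (u n) p μ) {C : ℝ≥0} (hC : ∀ n, eLpNorm (u n) p μ ≤ C) :
    ∃ φ : ℕ → ℕ, StrictMono φ ∧ ∃ f : α → ℝ, MemLp f p μ ∧ ∀ g : α → ℝ, MemLp g q μ →
      Tendsto (fun n ↦ ∫ x, u (φ n) x * g x ∂μ) atTop (𝓝 (∫ x, f x * g x ∂μ)) := by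
  have : Fact (q ≠ ∞) := ⟨hq⟩
  set B := (ContinuousLinearMap.mul ℝ ℝ).lpPairing μ p q
  have hbdd (n : ℕ) : StrongDual.toWeakDual (B ((hu n).toLp (u n))) ∈
      WeakDual.toStrongDual ⁻¹' Metric.closedBall (0 : StrongDual ℝ (Lp ℝ q μ)) (‖B‖ * C) := by
    rw [mem_preimage, mem_closedBall_zero_iff]
    refine B.le_opNorm_of_le ?_
    rw [Lp.norm_toLp]
    exact ENNReal.toReal_mono ENNReal.coe_ne_top (hC n)
  obtain ⟨ℓ, -, φ, hφ, hlim⟩ := WeakDual.isSeqCompact_closedBall ℝ (Lp ℝ q μ) 0 (‖B‖ * C) hbdd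
  obtain ⟨F, hF⟩ := exists_lpPairing_eq hp hq (WeakDual.toStrongDual ℓ)
  refine ⟨φ, hφ, F, Lp.memLp F, fun g hg ↦ ?_⟩
  have heval := ((WeakDual.eval_continuous (hg.toLp g)).tendsto ℓ).comp hlim
  have hℓg : ℓ (hg.toLp g) = ∫ x, F x * g x ∂μ := by
    rw [← lpPairing_mul_toLp (Lp.memLp F) hg, Lp.toLp_coeFn, hF]
    rfl
  rw [← hℓg]
  exact heval.congr fun n ↦ lpPairing_mul_toLp (hu (φ n)) hg

end Riesz

end FiniteMeasure

end LpDuality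

section MeasurePreliminaries

variable {α F : Type*} {mα : MeasurableSpace α} {μ : Measure α} [NormedAddCommGroup F] {q : ℝ≥0∞}

lemma tendsto_eLpNorm_zero_of_dominated (hq0 : q ≠ 0) (hq : q ≠ ∞) {D : ℕ → α → F} {h : α → ℝ}
    (hD : ∀ n, AEStronglyMeasurable (D n) μ) (hh : MemLp h q μ)
    (hDh : ∀ n, ∀ᵐ x ∂μ, ‖D n x‖ ≤ h x)
    (hlim : ∀ᵐ x ∂μ, Tendsto (fun n ↦ D n x) atTop (𝓝 0)) :
    Tendsto (fun n ↦ eLpNorm (D n) q μ) atTop (𝓝 0) := by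
  have hr : 0 < q.toReal := ENNReal.toReal_pos hq0 hq
  have hlint : Tendsto (fun n ↦ ∫⁻ x, ‖D n x‖ₑ ^ q.toReal ∂μ) atTop (𝓝 0) := by
    rw [← lintegral_zero (μ := μ)]
    refine tendsto_lintegral_of_dominated_convergence' (fun x ↦ ‖h x‖ₑ ^ q.toReal)
      (fun n ↦ (hD n).enorm.pow_const _) (fun n ↦ ?_)
      (lintegral_rpow_enorm_lt_top_of_eLpNorm_lt_top hq0 hq hh.2).ne ?_
    · filter_upwards [hDh n] with x hx
      gcongr
      exact enorm_le_iff_norm_le.2 (hx.trans (Real.le_norm_self _))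
    · filter_upwards [hlim] with x hx
      simpa [ENNReal.zero_rpow_of_pos hr] using hx.enorm.ennrpow_const q.toReal
  simpa [eLpNorm_eq_lintegral_rpow_enorm_toReal hq0 hq, Function.comp_def,
    ENNReal.zero_rpow_of_pos (inv_pos.2 hr)] using hlint.ennrpow_const q.toReal⁻¹

lemma ae_restrict_prod_fst_mem {β : Type*} [MeasurableSpace β] {ν : Measure β} {S : Set α}
    (hS : MeasurableSet S) : ∀ᵐ w ∂(μ.restrict S).prod ν, w.1 ∈ S :=
  Measure.quasiMeasurePreserving_fst.ae (ae_restrict_mem hS)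

end MeasurePreliminaries

section PeriodCell

variable {E ι : Type*} [NormedAddCommGroup E] [NormedSpace ℝ E] (b : Module.Basis ι ℝ E)

/-- The Haar measure `μ` normalized to a probability measure on the fundamental domain of the
lattice spanned by `b`; integration against it is averaging over the period cell. -/
def cellMeasure [MeasurableSpace E] (μ : Measure E) : Measure E :=
  ProbabilityTheory.cond μ (ZSpan.fundamentalDomain b)

variable {b} [Finite ι]

section Measure

variable [MeasurableSpace E] [BorelSpace E] {μ : Measure E}

lemma ae_cellMeasure_mem : ∀ᵐ z ∂cellMeasure b μ, z ∈ ZSpan.fundamentalDomain b :=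
  ProbabilityTheory.ae_cond_mem (ZSpan.fundamentalDomain_measurableSet b)

instance isProbabilityMeasure_cellMeasure [FiniteDimensional ℝ E] [μ.IsAddHaarMeasure] :
    IsProbabilityMeasure (cellMeasure b μ) :=
  ProbabilityTheory.cond_isProbabilityMeasure_of_finite
    (ZSpan.measure_fundamentalDomain_ne_zero b)
    (ZSpan.fundamentalDomain_isBounded b).measure_lt_top.ne

end Measure

variable [FiniteDimensional ℝ E] {S : Set E} {g : E × E → ℝ}

lemma exists_forall_abs_le_of_isBounded (hS : Bornology.IsBounded S) (hg : Continuous g) :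
    ∃ M, ∀ x ∈ S, ∀ z ∈ ZSpan.fundamentalDomain b, |g (x, z)| ≤ M := by
  have hK : IsCompact (closure S ×ˢ closure (ZSpan.fundamentalDomain b)) :=
    hS.isCompact_closure.prod (ZSpan.fundamentalDomain_isBounded b).isCompact_closure
  obtain ⟨M, hM⟩ := hK.exists_bound_of_continuousOn hg.continuousOn
  exact ⟨M, fun x hx z hz ↦ hM _ ⟨subset_closure hx, subset_closure hz⟩⟩

lemma memLp_prod_cellMeasure_of_continuous [MeasurableSpace E] [BorelSpace E] {μ : Measure E}
    [μ.IsAddHaarMeasure] {q : ℝ≥0∞} (hS : MeasurableSet S) (hSb : Bornology.IsBounded S)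
    (hg : Continuous g) : MemLp g q ((μ.restrict S).prod (cellMeasure b μ)) := by
  have : IsFiniteMeasure (μ.restrict S) := ⟨by simpa using hSb.measure_lt_top⟩
  obtain ⟨M, hM⟩ := exists_forall_abs_le_of_isBounded (b := b) hSb hg
  refine .of_bound hg.measurable.aestronglyMeasurable M ?_
  filter_upwards [ae_restrict_prod_fst_mem hS,
    Measure.quasiMeasurePreserving_snd.ae ae_cellMeasure_mem] with w hslow hfast
  exact hM w.1 hslow w.2 hfast

end PeriodCell

section Unfolding

variable {E ι : Type*} [NormedAddCommGroup E] [NormedSpace ℝ E] [Fintype ι]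
  (b : Module.Basis ι ℝ E)

section Fract

variable {b}

lemma fract_fract_sub_add (a s : E) :
    ZSpan.fract b (ZSpan.fract b a - a + s) = ZSpan.fract b s := by
  rw [ZSpan.fract_apply b a, sub_sub_cancel_left]
  exact ZSpan.fract_zSpan_add b s (neg_mem (ZSpan.floor b a).2)

variable [FiniteDimensional ℝ E] [MeasurableSpace E] [BorelSpace E]

lemma measurable_zspanFract : Measurable (ZSpan.fract b) := by
  have hcoord (i : ι) : Measurable (b.coord i) :=
    (b.coord i).continuous_of_finiteDimensional.measurable
  have hsum : ZSpan.fract b = fun x ↦ ∑ i, Int.fract (b.coord i x) • b i := by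
    ext x
    rw [← b.sum_repr (ZSpan.fract b x)]
    simp only [ZSpan.repr_fract_apply, Module.Basis.coord_apply]
  rw [hsum]
  exact Finset.measurable_fun_sum _ fun i _ ↦ (hcoord i).fract.smul_const (b i)

lemma measurePreserving_zspanFract {μ : Measure E} [μ.IsAddLeftInvariant] {D : Set E}
    (hD : IsAddFundamentalDomain (Submodule.span ℤ (range b)).toAddSubgroup D μ) :
    MeasurePreserving (ZSpan.fract b) (μ.restrict D)
      (μ.restrict (ZSpan.fundamentalDomain b)) := by
  have : Countable (Submodule.span ℤ (range b)).toAddSubgroup :=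
    inferInstanceAs (Countable (Submodule.span ℤ (range b)))
  refine ⟨measurable_zspanFract, Measure.ext fun B hB ↦ ?_⟩
  have hA : MeasurableSet (ZSpan.fract b ⁻¹' B) := measurable_zspanFract hB
  have hinv (v : (Submodule.span ℤ (range b)).toAddSubgroup) :
      (fun x ↦ v +ᵥ x) ⁻¹' (ZSpan.fract b ⁻¹' B) = ZSpan.fract b ⁻¹' B := by
    ext x
    rw [mem_preimage, mem_preimage, mem_preimage, AddSubgroup.vadd_def, vadd_eq_add,
      ZSpan.fract_zSpan_add b x v.2]
  have hcell : ZSpan.fract b ⁻¹' B ∩ ZSpan.fundamentalDomain b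
      = B ∩ ZSpan.fundamentalDomain b := by
    ext x
    exact and_congr_left fun hx ↦ by rw [mem_preimage, ZSpan.fract_eq_self.2 hx]
  rw [Measure.map_apply measurable_zspanFract hB, Measure.restrict_apply hA,
    Measure.restrict_apply hB, hD.measure_set_eq (ZSpan.isAddFundamentalDomain' b μ) hA hinv, hcell]

lemma measurePreserving_zspanFract_add (μ : Measure E) [μ.IsAddHaarMeasure] (a : E) :
    MeasurePreserving (fun z ↦ ZSpan.fract b (z + a)) (μ.restrict (ZSpan.fundamentalDomain b))
      (μ.restrict (ZSpan.fundamentalDomain b)) := by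
  have hF : IsAddFundamentalDomain (Submodule.span ℤ (range b)).toAddSubgroup
      (a +ᵥ ZSpan.fundamentalDomain b) μ := (ZSpan.isAddFundamentalDomain' b μ).vadd_of_comm a
  have hpre : (· + a) ⁻¹' (a +ᵥ ZSpan.fundamentalDomain b) = ZSpan.fundamentalDomain b := by
    ext z
    rw [mem_preimage, mem_vadd_set_iff_neg_vadd_mem, vadd_eq_add, neg_add_cancel_comm_assoc]
  have hadd := (measurePreserving_add_right μ a).restrict_preimage
    ((ZSpan.fundamentalDomain_measurableSet b).const_vadd a)
  rw [hpre] at hadd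
  exact (measurePreserving_zspanFract hF).comp hadd

end Fract

section UnfoldPoint

/-- The point congruent to `ε • w.2` modulo the lattice `ε • span b` that lies in the cell
`w.1 + ε • fundamentalDomain b`. Composing a function with this map is unfolding it into the slow
variable `w.1` and the fast variable `w.2`. -/
def unfoldPoint (ε : ℝ) (w : E × E) : E := w.1 + ε • ZSpan.fract b (w.2 - ε⁻¹ • w.1)

/-- A right inverse of unfolding on the period cell: `unfoldPoint b ε (foldShift b ε (x, s)) = x`
for every `s` in the fundamental domain. -/
def foldShift (ε : ℝ) (w : E × E) : E × E := (w.1 - ε • w.2, ZSpan.fract b (ε⁻¹ • w.1))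

variable {b} {ε : ℝ}

lemma unfoldPoint_foldShift (hε : ε ≠ 0) {w : E × E} (hw : w.2 ∈ ZSpan.fundamentalDomain b) :
    unfoldPoint b ε (foldShift b ε w) = w.1 := by
  have hfast : ZSpan.fract b (ε⁻¹ • w.1) - ε⁻¹ • (w.1 - ε • w.2)
      = ZSpan.fract b (ε⁻¹ • w.1) - ε⁻¹ • w.1 + w.2 := by
    rw [smul_sub, inv_smul_smul₀ hε, sub_sub_eq_add_sub, sub_add_eq_add_sub]
  rw [unfoldPoint, foldShift, hfast, fract_fract_sub_add, ZSpan.fract_eq_self.2 hw, sub_add_cancel]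

variable [MeasurableSpace E] [BorelSpace E] {μ : Measure E}

lemma ae_unfoldPoint_foldShift (hε : ε ≠ 0) :
    ∀ᵐ w ∂μ.prod (cellMeasure b μ), unfoldPoint b ε (foldShift b ε w) = w.1 := by
  filter_upwards [Measure.quasiMeasurePreserving_snd.ae ae_cellMeasure_mem] with w hw
  exact unfoldPoint_foldShift hε hw

variable [FiniteDimensional ℝ E]

lemma measurable_unfoldPoint : Measurable (unfoldPoint b ε) :=
  measurable_fst.add ((measurable_zspanFract.comp
    (measurable_snd.sub (measurable_fst.const_smul ε⁻¹))).const_smul ε)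

lemma measurable_foldShift : Measurable (foldShift b ε) :=
  (measurable_fst.sub (measurable_snd.const_smul ε)).prodMk
    (measurable_zspanFract.comp (measurable_fst.const_smul ε⁻¹))

variable [μ.IsAddHaarMeasure]

lemma measurePreserving_fract_add_cellMeasure (a : E) :
    MeasurePreserving (fun z ↦ ZSpan.fract b (z + a)) (cellMeasure b μ) (cellMeasure b μ) :=
  (measurePreserving_zspanFract_add μ a).smul_measure _

lemma measurePreserving_foldShift (hε : ε ≠ 0) :
    MeasurePreserving (foldShift b ε) (μ.prod (cellMeasure b μ)) (μ.prod (cellMeasure b μ)) := by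
  have hslow : MeasurePreserving (fun w : E × E ↦ (w.1, w.2 - ε • w.1))
      ((cellMeasure b μ).prod μ) ((cellMeasure b μ).prod μ) :=
    (MeasurePreserving.id _).skew_product (g := fun s x ↦ x - ε • s) (by fun_prop)
      (ae_of_all _ fun s ↦ (measurePreserving_sub_right μ _).map_eq)
  have hfast : MeasurePreserving (fun w : E × E ↦ (w.1, ZSpan.fract b (w.2 + ε⁻¹ • w.1)))
      (μ.prod (cellMeasure b μ)) (μ.prod (cellMeasure b μ)) :=
    (MeasurePreserving.id _).skew_product (g := fun x s ↦ ZSpan.fract b (s + ε⁻¹ • x))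
      (measurable_zspanFract.comp (by fun_prop))
      (ae_of_all _ fun x ↦ (measurePreserving_fract_add_cellMeasure _).map_eq)
  convert hfast.comp (Measure.measurePreserving_swap.comp
    (hslow.comp Measure.measurePreserving_swap)) using 1
  ext1 w
  simp only [foldShift, Function.comp_apply, Prod.swap, smul_sub, inv_smul_smul₀ hε,
    add_sub_cancel]

lemma measurePreserving_unfoldPoint (hε : ε ≠ 0) :
    MeasurePreserving (unfoldPoint b ε) (μ.prod (cellMeasure b μ)) μ := by
  refine ⟨measurable_unfoldPoint, ?_⟩
  have hshift := measurePreserving_foldShift (b := b) (μ := μ) hε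
  conv_lhs => rw [← hshift.map_eq, Measure.map_map measurable_unfoldPoint hshift.measurable]
  exact (Measure.map_congr (ae_unfoldPoint_foldShift hε)).trans measurePreserving_fst.map_eq

lemma integral_unfoldPoint_mul (hε : ε ≠ 0) {v : E → ℝ} {G : E × E → ℝ}
    (hv : AEStronglyMeasurable v μ) (hG : AEStronglyMeasurable G (μ.prod (cellMeasure b μ))) :
    ∫ w, v (unfoldPoint b ε w) * G w ∂μ.prod (cellMeasure b μ)
      = ∫ w, v w.1 * G (foldShift b ε w) ∂μ.prod (cellMeasure b μ) := by
  have hshift := measurePreserving_foldShift (b := b) (μ := μ) hε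
  have hprod : AEStronglyMeasurable (fun w ↦ v (unfoldPoint b ε w) * G w)
      (μ.prod (cellMeasure b μ)) :=
    (hv.comp_measurePreserving (measurePreserving_unfoldPoint hε)).mul hG
  rw [← hshift.map_eq] at hprod
  conv_lhs => rw [← hshift.map_eq, integral_map hshift.measurable.aemeasurable hprod]
  refine integral_congr_ae ?_
  filter_upwards [ae_unfoldPoint_foldShift (b := b) (μ := μ) hε] with w hw
  rw [hw]

end UnfoldPoint

section UnfoldingOperator

variable [FiniteDimensional ℝ E] [MeasurableSpace E] [BorelSpace E] {μ : Measure E}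
  [μ.IsAddHaarMeasure] {S : Set E} {ε : ℝ} {p : ℝ≥0∞} {u : E → ℝ}

/-- The unfolding of `u : S → ℝ` at scale `ε`, with `u` extended by zero outside `S`. -/
def unfolding (S : Set E) (ε : ℝ) (u : E → ℝ) (w : E × E) : ℝ := S.indicator u (unfoldPoint b ε w)

variable {b}

lemma eLpNorm_unfolding_le (hε : ε ≠ 0) (hS : MeasurableSet S)
    (hu : AEStronglyMeasurable u (μ.restrict S)) :
    eLpNorm (unfolding b S ε u) p ((μ.restrict S).prod (cellMeasure b μ))
      ≤ eLpNorm u p (μ.restrict S) := by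
  calc eLpNorm (unfolding b S ε u) p ((μ.restrict S).prod (cellMeasure b μ))
      ≤ eLpNorm (unfolding b S ε u) p (μ.prod (cellMeasure b μ)) :=
        eLpNorm_mono_measure _ (Measure.prod_mono Measure.restrict_le_self le_rfl)
    _ = eLpNorm (S.indicator u) p μ :=
        eLpNorm_comp_measurePreserving ((aestronglyMeasurable_indicator_iff hS).2 hu)
          (measurePreserving_unfoldPoint hε)
    _ = eLpNorm u p (μ.restrict S) := eLpNorm_indicator_eq_eLpNorm_restrict hS

lemma memLp_unfolding (hε : ε ≠ 0) (hS : MeasurableSet S) (hu : MemLp u p (μ.restrict S)) :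
    MemLp (unfolding b S ε u) p ((μ.restrict S).prod (cellMeasure b μ)) :=
  (((memLp_indicator_iff_restrict hS).2 hu).comp_measurePreserving
    (measurePreserving_unfoldPoint hε)).mono_measure
      (Measure.prod_mono Measure.restrict_le_self le_rfl)

lemma integral_unfolding_mul (hε : ε ≠ 0) (hS : MeasurableSet S)
    (hu : AEStronglyMeasurable u (μ.restrict S)) {g : E × E → ℝ}
    (hg : AEStronglyMeasurable g ((μ.restrict S).prod (cellMeasure b μ))) :
    ∫ w, unfolding b S ε u w * g w ∂(μ.restrict S).prod (cellMeasure b μ)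
      = ∫ w, u w.1 * (S ×ˢ univ).indicator g (foldShift b ε w)
          ∂(μ.restrict S).prod (cellMeasure b μ) := by
  have hSu : MeasurableSet (S ×ˢ (univ : Set E)) := hS.prod .univ
  have hrestrict : (μ.restrict S).prod (cellMeasure b μ)
      = (μ.prod (cellMeasure b μ)).restrict (S ×ˢ univ) := by
    rw [← Measure.prod_restrict, Measure.restrict_univ]
  rw [hrestrict] at hg ⊢
  rw [← integral_indicator hSu, ← integral_indicator hSu]
  convert integral_unfoldPoint_mul hε ((aestronglyMeasurable_indicator_iff hS).2 hu)
    ((aestronglyMeasurable_indicator_iff hSu).2 hg) using 2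
  · ext w
    rw [indicator_mul_right, unfolding]
  · ext w
    rw [indicator_mul_left]
    by_cases hw : w.1 ∈ S <;> simp [hw]

end UnfoldingOperator

section TestDefect

variable {b} {S : Set E} {g : E × E → ℝ}

/-- The error committed by replacing the oscillating test function `g (x, fract (ε⁻¹ • x))` by the
translate that unfolding produces. -/
def testDefect (b : Module.Basis ι ℝ E) (S : Set E) (g : E × E → ℝ) (ε : ℝ) (w : E × E) : ℝ :=
  g (w.1, ZSpan.fract b (ε⁻¹ • w.1)) - (S ×ˢ univ).indicator g (foldShift b ε w)

lemma abs_testDefect_le {M : ℝ} (hM : ∀ x ∈ S, ∀ z ∈ ZSpan.fundamentalDomain b, |g (x, z)| ≤ M)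
    (ε : ℝ) {w : E × E} (hw : w.1 ∈ S) : |testDefect b S g ε w| ≤ M + M := by
  have hfast := ZSpan.fract_mem_fundamentalDomain b (ε⁻¹ • w.1)
  have hosc := hM w.1 hw _ hfast
  refine (abs_sub _ _).trans (add_le_add hosc ?_)
  by_cases hshift : w.1 - ε • w.2 ∈ S
  · simpa [foldShift, hshift] using hM _ hshift _ hfast
  · simpa [foldShift, hshift] using (abs_nonneg _).trans hosc

variable [FiniteDimensional ℝ E]

lemma tendsto_testDefect (hS : IsOpen S) (hg : Continuous g) {ε : ℕ → ℝ}
    (hε : Tendsto ε atTop (𝓝 0)) {w : E × E} (hw : w.1 ∈ S) :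
    Tendsto (fun n ↦ testDefect b S g (ε n) w) atTop (𝓝 0) := by
  have hshift : Tendsto (fun n ↦ w.1 - ε n • w.2) atTop (𝓝 w.1) := by
    simpa using (tendsto_const_nhds (x := w.1)).sub (hε.smul_const w.2)
  rw [Metric.tendsto_nhds]
  intro δ hδ
  have huniform : ∀ᶠ x in 𝓝 w.1, ∀ z ∈ closure (ZSpan.fundamentalDomain b),
      |g (w.1, z) - g (x, z)| < δ := by
    refine (ZSpan.fundamentalDomain_isBounded b).isCompact_closure
      |>.eventually_forall_of_forall_eventually fun z _ ↦ ?_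
    have hcont : Continuous fun y : E × E ↦ |g (w.1, y.2) - g (y.1, y.2)| := by fun_prop
    exact hcont.continuousAt.eventually_lt continuousAt_const (by simpa using hδ)
  filter_upwards [hshift.eventually huniform, hshift.eventually (hS.mem_nhds hw)] with n hclose hmem
  have hind : foldShift b (ε n) w ∈ S ×ˢ (univ : Set E) := ⟨hmem, mem_univ _⟩
  rw [Real.dist_0_eq_abs, testDefect, indicator_of_mem hind]
  exact hclose _ (subset_closure (ZSpan.fract_mem_fundamentalDomain b _))

variable [MeasurableSpace E] [BorelSpace E]

lemma measurable_testDefect (hS : MeasurableSet S) (hg : Measurable g) (ε : ℝ) :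
    Measurable (testDefect b S g ε) :=
  (hg.comp (measurable_fst.prodMk measurable_foldShift.snd)).sub
    ((hg.indicator (hS.prod .univ)).comp measurable_foldShift)

variable {μ : Measure E} [μ.IsAddHaarMeasure] {p q : ℝ≥0∞}

lemma memLp_testDefect (hSo : IsOpen S) (hSb : Bornology.IsBounded S) (hg : Continuous g) (ε : ℝ) :
    MemLp (testDefect b S g ε) q ((μ.restrict S).prod (cellMeasure b μ)) := by
  have : IsFiniteMeasure (μ.restrict S) := ⟨by simpa using hSb.measure_lt_top⟩
  obtain ⟨M, hM⟩ := exists_forall_abs_le_of_isBounded (b := b) hSb hg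
  refine .of_bound (measurable_testDefect hSo.measurableSet hg.measurable ε).aestronglyMeasurable
    (M + M) ?_
  filter_upwards [ae_restrict_prod_fst_mem hSo.measurableSet] with w hw
  exact abs_testDefect_le hM ε hw

lemma tendsto_eLpNorm_testDefect (hq0 : q ≠ 0) (hq : q ≠ ∞) (hSo : IsOpen S)
    (hSb : Bornology.IsBounded S) (hg : Continuous g) {ε : ℕ → ℝ} (hε : Tendsto ε atTop (𝓝 0)) :
    Tendsto (fun n ↦ eLpNorm (testDefect b S g (ε n)) q ((μ.restrict S).prod (cellMeasure b μ)))
      atTop (𝓝 0) := by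
  have : IsFiniteMeasure (μ.restrict S) := ⟨by simpa using hSb.measure_lt_top⟩
  obtain ⟨M, hM⟩ := exists_forall_abs_le_of_isBounded (b := b) hSb hg
  have hmem := ae_restrict_prod_fst_mem (μ := μ) (ν := cellMeasure b μ) hSo.measurableSet
  refine tendsto_eLpNorm_zero_of_dominated hq0 hq (h := fun _ ↦ M + M)
    (fun n ↦ (memLp_testDefect (q := q) hSo hSb hg (ε n)).aestronglyMeasurable)
    (memLp_const _) (fun n ↦ ?_) ?_
  · filter_upwards [hmem] with w hw using abs_testDefect_le hM (ε n) hw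
  · filter_upwards [hmem] with w hw using tendsto_testDefect hSo hg hε hw

lemma memLp_comp_prodMk_fract (hSo : IsOpen S) (hSb : Bornology.IsBounded S) (hg : Continuous g)
    (ε : ℝ) : MemLp (fun x ↦ g (x, ZSpan.fract b (ε⁻¹ • x))) q (μ.restrict S) := by
  have : IsFiniteMeasure (μ.restrict S) := ⟨by simpa using hSb.measure_lt_top⟩
  obtain ⟨M, hM⟩ := exists_forall_abs_le_of_isBounded (b := b) hSb hg
  refine .of_bound (hg.measurable.comp (measurable_id.prodMk (measurable_zspanFract.comp
    (measurable_const_smul ε⁻¹)))).aestronglyMeasurable M ?_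
  filter_upwards [ae_restrict_mem hSo.measurableSet] with x hx
  exact hM x hx _ (ZSpan.fract_mem_fundamentalDomain b _)

lemma integral_mul_fract_sub_integral_unfolding_mul [p.HolderConjugate q] {ε : ℝ} (hε : ε ≠ 0)
    (hSo : IsOpen S) (hSb : Bornology.IsBounded S) {u : E → ℝ} (hu : MemLp u p (μ.restrict S))
    (hg : Continuous g) :
    (∫ x in S, u x * g (x, ZSpan.fract b (ε⁻¹ • x)) ∂μ)
        - ∫ w, unfolding b S ε u w * g w ∂(μ.restrict S).prod (cellMeasure b μ)
      = ∫ w, u w.1 * testDefect b S g ε w ∂(μ.restrict S).prod (cellMeasure b μ) := by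
  have hfst := measurePreserving_fst (μ := μ.restrict S) (ν := cellMeasure b μ)
  have hosc : MemLp (fun w : E × E ↦ g (w.1, ZSpan.fract b (ε⁻¹ • w.1))) q
      ((μ.restrict S).prod (cellMeasure b μ)) :=
    (memLp_comp_prodMk_fract hSo hSb hg ε).comp_measurePreserving hfst
  have hu' : MemLp (fun w : E × E ↦ u w.1) p ((μ.restrict S).prod (cellMeasure b μ)) :=
    hu.comp_measurePreserving hfst
  have hdefect : MemLp (testDefect b S g ε) q ((μ.restrict S).prod (cellMeasure b μ)) :=
    memLp_testDefect hSo hSb hg ε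
  have hlift : ∫ x in S, u x * g (x, ZSpan.fract b (ε⁻¹ • x)) ∂μ
      = ∫ w, u w.1 * g (w.1, ZSpan.fract b (ε⁻¹ • w.1)) ∂(μ.restrict S).prod (cellMeasure b μ) := by
    simpa using (integral_fun_fst (μ := μ.restrict S) (ν := cellMeasure b μ)
      fun x ↦ u x * g (x, ZSpan.fract b (ε⁻¹ • x))).symm
  have hsplit (w : E × E) : u w.1 * (S ×ˢ univ).indicator g (foldShift b ε w)
      = u w.1 * g (w.1, ZSpan.fract b (ε⁻¹ • w.1)) - u w.1 * testDefect b S g ε w := by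
    rw [testDefect]
    ring
  have hosc_int : Integrable (fun w ↦ u w.1 * g (w.1, ZSpan.fract b (ε⁻¹ • w.1)))
      ((μ.restrict S).prod (cellMeasure b μ)) := hu'.integrable_mul hosc
  have hdefect_int : Integrable (fun w ↦ u w.1 * testDefect b S g ε w)
      ((μ.restrict S).prod (cellMeasure b μ)) := hu'.integrable_mul hdefect
  rw [integral_unfolding_mul hε hSo.measurableSet hu.aestronglyMeasurable
    hg.measurable.aestronglyMeasurable, hlift]
  simp_rw [hsplit]
  rw [integral_sub hosc_int hdefect_int, sub_sub_cancel]

end TestDefect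

section Compactness

variable [FiniteDimensional ℝ E] [MeasurableSpace E] [BorelSpace E] {μ : Measure E}
  [μ.IsAddHaarMeasure] {S : Set E} {p q : ℝ≥0∞} [Fact (1 ≤ p)] [Fact (1 ≤ q)] [p.HolderConjugate q]
  {ε : ℕ → ℝ} {u : ℕ → E → ℝ} {C : ℝ≥0}

variable {b} in
lemma tendsto_integral_mul_fract_sub_integral_unfolding_mul (hq : q ≠ ∞) (hSo : IsOpen S)
    (hSb : Bornology.IsBounded S) (hε : ∀ n, ε n ≠ 0) (hε0 : Tendsto ε atTop (𝓝 0))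
    (hu : ∀ n, MemLp (u n) p (μ.restrict S)) (hC : ∀ n, eLpNorm (u n) p (μ.restrict S) ≤ C)
    {g : E × E → ℝ} (hg : Continuous g) :
    Tendsto (fun n ↦ (∫ x in S, u n x * g (x, ZSpan.fract b ((ε n)⁻¹ • x)) ∂μ)
        - ∫ w, unfolding b S (ε n) (u n) w * g w ∂(μ.restrict S).prod (cellMeasure b μ))
      atTop (𝓝 0) := by
  have hfst := measurePreserving_fst (μ := μ.restrict S) (ν := cellMeasure b μ)
  have hq0 : q ≠ 0 := (zero_lt_one.trans_le (Fact.out : 1 ≤ q)).ne'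
  simp_rw [fun n ↦ integral_mul_fract_sub_integral_unfolding_mul (b := b) (q := q)
    (hε n) hSo hSb (hu n) hg]
  refine tendsto_integral_mul_zero (p := p) (q := q) (C := C)
    (fun n ↦ (hu n).comp_measurePreserving hfst) (fun n ↦ ?_)
    (fun n ↦ memLp_testDefect hSo hSb hg (ε n))
    (tendsto_eLpNorm_testDefect hq0 hq hSo hSb hg hε0)
  exact (eLpNorm_comp_measurePreserving (hu n).aestronglyMeasurable hfst).trans_le (hC n)

theorem exists_subseq_tendsto_integral_mul_fract (hp : p ≠ ∞) (hq : q ≠ ∞) (hSo : IsOpen S)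
    (hSb : Bornology.IsBounded S) (hε : ∀ n, ε n ≠ 0) (hε0 : Tendsto ε atTop (𝓝 0))
    (hu : ∀ n, MemLp (u n) p (μ.restrict S)) (hC : ∀ n, eLpNorm (u n) p (μ.restrict S) ≤ C) :
    ∃ φ : ℕ → ℕ, StrictMono φ ∧
      ∃ f : E × E → ℝ, MemLp f p ((μ.restrict S).prod (cellMeasure b μ)) ∧
        ∀ g : E × E → ℝ, Continuous g →
          Tendsto (fun n ↦ ∫ x in S, u (φ n) x * g (x, ZSpan.fract b ((ε (φ n))⁻¹ • x)) ∂μ) atTop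
            (𝓝 (∫ w, f w * g w ∂(μ.restrict S).prod (cellMeasure b μ))) := by
  have : IsFiniteMeasure (μ.restrict S) := ⟨by simpa using hSb.measure_lt_top⟩
  obtain ⟨φ, hφ, f, hf, hlim⟩ := exists_subseq_tendsto_integral_mul (q := q) hp hq
    (fun n ↦ memLp_unfolding (b := b) (hε n) hSo.measurableSet (hu n))
    (fun n ↦ (eLpNorm_unfolding_le (hε n) hSo.measurableSet
      (hu n).aestronglyMeasurable).trans (hC n))
  refine ⟨φ, hφ, f, hf, fun g hg ↦ ?_⟩
  have hdiff := tendsto_integral_mul_fract_sub_integral_unfolding_mul (b := b) (q := q) hq hSo hSb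
    (fun n ↦ hε (φ n)) (hε0.comp hφ.tendsto_atTop) (fun n ↦ hu (φ n)) (fun n ↦ hC (φ n)) hg
  simpa using hdiff.add (hlim g (memLp_prod_cellMeasure_of_continuous hSo.measurableSet hSb hg))

end Compactness

end Unfolding

section UnitCell

variable {N : ℕ}

/-- The standard basis of `ℝ × ℝ^N`, whose lattice `ℤ × ℤ^N` is the period lattice of `𝒵`. -/
def spaceTimeBasis (N : ℕ) : Module.Basis (Unit ⊕ Fin N) ℝ (ℝ × Vn N) :=
  (Module.Basis.singleton Unit ℝ).prod (Pi.basisFun ℝ (Fin N))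

lemma spaceTimeBasis_repr (z : ℝ × Vn N) :
    ⇑((spaceTimeBasis N).repr z) = Sum.elim (fun _ ↦ z.1) z.2 := by
  ext (i | i) <;> simp [spaceTimeBasis]

lemma fract_spaceTimeBasis (z : ℝ × Vn N) :
    ZSpan.fract (spaceTimeBasis N) z = (Int.fract z.1, fun i ↦ Int.fract (z.2 i)) := by
  refine (spaceTimeBasis N).ext_elem fun i ↦ ?_
  rw [ZSpan.repr_fract_apply, spaceTimeBasis_repr, spaceTimeBasis_repr]
  cases i <;> rfl

lemma fundamentalDomain_spaceTimeBasis :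
    ZSpan.fundamentalDomain (spaceTimeBasis N) = Ico 0 1 ×ˢ univ.pi fun _ ↦ Ico 0 1 := by
  ext z
  simp [ZSpan.mem_fundamentalDomain, spaceTimeBasis_repr, mem_prod, Set.mem_pi]

instance isAddHaarMeasure_volume_spaceTime :
    (volume : Measure (ℝ × Vn N)).IsAddHaarMeasure :=
  inferInstanceAs ((volume : Measure ℝ).prod (volume : Measure (Vn N))).IsAddHaarMeasure

lemma cellMeasure_spaceTimeBasis :
    cellMeasure (spaceTimeBasis N) volume
      = (volume.restrict cellT).prod (volume.restrict (cellY N)) := by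
  have hae : ZSpan.fundamentalDomain (spaceTimeBasis N) =ᵐ[volume] cellT ×ˢ cellY N := by
    rw [fundamentalDomain_spaceTimeBasis]
    exact Measure.set_prod_ae_eq Ioo_ae_eq_Ico.symm
      (Measure.pi_Ico_ae_eq_pi_Icc.trans Measure.pi_Ioo_ae_eq_pi_Icc.symm)
  have hone : volume (cellT ×ˢ cellY N) = 1 := by
    simp [Measure.volume_eq_prod, cellT, cellY, Real.volume_pi_Ioo]
  rw [cellMeasure, ProbabilityTheory.cond, Measure.restrict_congr_set hae, measure_congr hae, hone,
    inv_one, one_smul, Measure.prod_restrict, Measure.volume_eq_prod]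

lemma volume_restrict_prod_cell (S : Set (ℝ × Vn N)) :
    (volume : Measure ((ℝ × Vn N) × ℝ × Vn N)).restrict (S ×ˢ cellT ×ˢ cellY N)
      = (volume.restrict S).prod (cellMeasure (spaceTimeBasis N) volume) := by
  rw [cellMeasure_spaceTimeBasis, Measure.prod_restrict, Measure.prod_restrict]
  rfl

lemma ZPer.apply_fract {w : ℝ → Vn N → ℝ} (hw : ZPer w) (z : ℝ × Vn N) :
    w (ZSpan.fract (spaceTimeBasis N) z).1 (ZSpan.fract (spaceTimeBasis N) z).2 = w z.1 z.2 := by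
  rw [← hw _ _ ⌊z.1⌋ fun i ↦ ⌊z.2 i⌋]
  simp only [fract_spaceTimeBasis, Int.fract_add_floor]

end UnitCell

section PeriodicExtension

variable {N : ℕ} {f : (ℝ × Vn N) × ℝ × Vn N → ℝ} {S : Set (ℝ × Vn N)} {p : ℝ}

/-- The extension by `𝒵`-periodicity in the fast variables of the values of `f` on the unit cell. -/
def periodicExtension (f : (ℝ × Vn N) × ℝ × Vn N → ℝ) (x : ℝ × Vn N) (τ : ℝ) (y : Vn N) : ℝ :=
  f (x, ZSpan.fract (spaceTimeBasis N) (τ, y))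

lemma zPer_periodicExtension (x : ℝ × Vn N) : ZPer (periodicExtension f x) := by
  intro τ y l k
  simp only [periodicExtension, fract_spaceTimeBasis, Int.fract_add_intCast]

lemma periodicExtension_ae_eq {ν : Measure (ℝ × Vn N)} :
    ∀ᵐ w ∂ν.prod (cellMeasure (spaceTimeBasis N) volume),
      periodicExtension f w.1 w.2.1 w.2.2 = f w := by
  filter_upwards [Measure.quasiMeasurePreserving_snd.ae ae_cellMeasure_mem] with w hw
  rw [periodicExtension, ZSpan.fract_eq_self.2 hw]

lemma integrableOn_abs_periodicExtension_rpow (hp : 0 < p) (hf : MemLp f (ENNReal.ofReal p)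
      ((volume.restrict S).prod (cellMeasure (spaceTimeBasis N) volume))) :
    IntegrableOn (fun z : (ℝ × Vn N) × ℝ × Vn N ↦ |periodicExtension f z.1 z.2.1 z.2.2| ^ p)
      (S ×ˢ cellT ×ˢ cellY N) volume := by
  rw [IntegrableOn, volume_restrict_prod_cell]
  have hint := hf.integrable_norm_rpow (ENNReal.ofReal_pos.2 hp).ne' ENNReal.ofReal_ne_top
  rw [ENNReal.toReal_ofReal hp.le] at hint
  refine hint.congr ?_
  filter_upwards [periodicExtension_ae_eq (f := f)] with w hw
  rw [hw, Real.norm_eq_abs]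

lemma integral_periodicExtension_mul {g : (ℝ × Vn N) × ℝ × Vn N → ℝ}
    (hfg : Integrable (fun w ↦ f w * g w)
      ((volume.restrict S).prod (cellMeasure (spaceTimeBasis N) volume))) :
    ∫ x in S, ∫ τ in cellT, ∫ y in cellY N, periodicExtension f x τ y * g (x, τ, y)
      = ∫ w, f w * g w ∂(volume.restrict S).prod (cellMeasure (spaceTimeBasis N) volume) := by
  have hae : (fun w ↦ f w * g w)
      =ᵐ[(volume.restrict S).prod (cellMeasure (spaceTimeBasis N) volume)]
        fun w ↦ periodicExtension f w.1 w.2.1 w.2.2 * g w := by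
    filter_upwards [periodicExtension_ae_eq (f := f)] with w hw
    rw [hw]
  have hext := hfg.congr hae
  rw [integral_congr_ae hae, integral_prod _ hext]
  refine integral_congr_ae ?_
  filter_upwards [hext.prod_right_ae] with x hx
  rw [cellMeasure_spaceTimeBasis] at hx ⊢
  exact (integral_prod _ hx).symm

end PeriodicExtension

section IntegralBound

variable {α : Type*} {mα : MeasurableSpace α} {μ : Measure α} {p : ℝ} {u : α → ℝ}

lemma memLp_ofReal_of_integrable_abs_rpow (hp : 0 < p) (hu : AEStronglyMeasurable u μ)
    (hint : Integrable (fun x ↦ |u x| ^ p) μ) : MemLp u (ENNReal.ofReal p) μ := by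
  rw [← integrable_norm_rpow_iff hu (ENNReal.ofReal_pos.2 hp).ne' ENNReal.ofReal_ne_top,
    ENNReal.toReal_ofReal hp.le]
  exact hint

lemma eLpNorm_ofReal_le_of_integral_abs_rpow_le (hp : 0 < p) (hu : MemLp u (ENNReal.ofReal p) μ)
    {C : ℝ} (hC : ∫ x, |u x| ^ p ∂μ ≤ C) :
    eLpNorm u (ENNReal.ofReal p) μ ≤ (C ^ p⁻¹).toNNReal := by
  rw [hu.eLpNorm_eq_integral_rpow_norm (ENNReal.ofReal_pos.2 hp).ne' ENNReal.ofReal_ne_top,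
    ENNReal.toReal_ofReal hp.le]
  refine ENNReal.ofReal_le_ofReal (Real.rpow_le_rpow ?_ hC (inv_nonneg.2 hp.le))
  exact integral_nonneg fun x ↦ Real.rpow_nonneg (norm_nonneg _) _

end IntegralBound

theorem two_scale_compactness_general
    (N : ℕ) (S : Set (ℝ × Vn N)) (hSo : IsOpen S) (hSb : Bornology.IsBounded S)
    (p : ℝ) (hp1 : 1 < p)
    (ε : ℕ → ℝ) (hε : ∀ n, ε n ≠ 0) (hεlim : Tendsto ε atTop (𝓝 0))
    (u : ℕ → ℝ × Vn N → ℝ)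
    (humeas : ∀ n, AEStronglyMeasurable (u n) (volume.restrict S))
    (huint : ∀ n, IntegrableOn (fun q ↦ |u n q| ^ p) S volume)
    (hubdd : ∃ C : ℝ, ∀ n, (∫ q in S, |u n q| ^ p) ≤ C) :
    ∃ φ : ℕ → ℕ, StrictMono φ ∧
    ∃ u₀ : ℝ × Vn N → ℝ → Vn N → ℝ,
      (∀ q, ZPer (u₀ q)) ∧
      IntegrableOn
        (fun z : (ℝ × Vn N) × ℝ × Vn N ↦ |u₀ z.1 z.2.1 z.2.2| ^ p)
        (S ×ˢ cellT ×ˢ cellY N) volume ∧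
      WeakTwoScale N S p (fun n ↦ ε (φ n)) (fun n ↦ u (φ n)) u₀ := by
  obtain ⟨C, hC⟩ := hubdd
  have hpq : p.HolderConjugate (p / (p - 1)) := .conjExponent hp1
  have := hpq.ennrealOfReal
  have : Fact (1 ≤ ENNReal.ofReal p) := ⟨ENNReal.one_le_ofReal.2 hpq.lt.le⟩
  have : Fact (1 ≤ ENNReal.ofReal (p / (p - 1))) := ⟨ENNReal.one_le_ofReal.2 hpq.symm.lt.le⟩
  have hu (n : ℕ) := memLp_ofReal_of_integrable_abs_rpow hpq.pos (humeas n) (huint n)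
  obtain ⟨φ, hφ, f, hf, hlim⟩ := exists_subseq_tendsto_integral_mul_fract (spaceTimeBasis N)
    (q := ENNReal.ofReal (p / (p - 1))) ENNReal.ofReal_ne_top ENNReal.ofReal_ne_top hSo hSb hε hεlim
    hu fun n ↦ eLpNorm_ofReal_le_of_integral_abs_rpow_le hpq.pos (hu n) (hC n)
  refine ⟨φ, hφ, periodicExtension f, zPer_periodicExtension,
    integrableOn_abs_periodicExtension_rpow hpq.pos hf, fun ψ hψ ↦ ?_⟩
  have hfψ := hf.integrable_mul (memLp_prod_cellMeasure_of_continuous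
    (q := ENNReal.ofReal (p / (p - 1))) hSo.measurableSet hSb hψ.cont)
  rw [integral_periodicExtension_mul (g := fun w ↦ ψ w.1.1 w.1.2 w.2.1 w.2.2) hfψ]
  refine (hlim _ hψ.cont).congr fun n ↦ ?_
  simp only [(hψ.per _ _).apply_fract, Prod.smul_fst, Prod.smul_snd, smul_eq_mul, Pi.smul_def,
    div_eq_inv_mul]

/-- Theorem 3.2, two-scale compactness in `L^p`: if `1 < p < ∞`,
`ε_n → 0⁺`, and `(u_{ε_n})` is bounded in `L^p(Q_T)`, then there is a subsequence and a
function `u ∈ L^p(Q_T × 𝒯 × 𝒴)` (extended `𝒵`-periodically) such that the subsequence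
weakly two-scale converges to `u` in `L^p(Q_T)`. -/
theorem two_scale_compactness
    (N : ℕ) (Q : Set (Vn N)) (hQo : IsOpen Q) (hQb : Bornology.IsBounded Q)
    (T : ℝ) (hT : 0 < T) (p : ℝ) (hp1 : 1 < p)
    (ε : ℕ → ℝ) (hεpos : ∀ n, 0 < ε n) (hεlim : Tendsto ε atTop (nhds 0))
    (u : ℕ → ℝ × Vn N → ℝ)
    (humeas : ∀ n, AEStronglyMeasurable (u n) (volume.restrict (Set.Ioo 0 T ×ˢ Q)))
    (huint : ∀ n, IntegrableOn (fun q => |u n q| ^ p) (Set.Ioo 0 T ×ˢ Q) volume)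
    (hubdd : ∃ C : ℝ, ∀ n, (∫ q in Set.Ioo 0 T ×ˢ Q, |u n q| ^ p) ≤ C) :
    ∃ φ : ℕ → ℕ, StrictMono φ ∧
    ∃ u₀ : ℝ × Vn N → ℝ → Vn N → ℝ,
      (∀ q, ZPer (u₀ q)) ∧
      IntegrableOn
        (fun z : (ℝ × Vn N) × ℝ × Vn N => |u₀ z.1 z.2.1 z.2.2| ^ p)
        ((Set.Ioo 0 T ×ˢ Q) ×ˢ cellT ×ˢ cellY N) volume ∧
      WeakTwoScale N (Set.Ioo 0 T ×ˢ Q) p (fun n => ε (φ n)) (fun n => u (φ n)) u₀ := by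
  exact two_scale_compactness_general N _ (isOpen_Ioo.prod hQo)
    ((Metric.isBounded_Ioo 0 T).prod hQb) p hp1 ε (fun n ↦ (hεpos n).ne') hεlim u humeas huint hubdd
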